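/- Let n and j be positive integers with 4j ≤ n − 1, let M be distributed according to the Haar probability measure on SO(n,ℝ), and set W = Tr(M^j)/√j if j is odd and W = (Tr(M^j) − 1)/√j if j is even. Then the first four moments of W match those of a standard normal random variable: E[W] = 0, E[W²] = 1, E[W³] = 0, and E[W⁴] = 3. -/

import Mathlib

open MeasureTheory ProbabilityTheory Matrix

/-- Matrices over a measurable space of entries carry the product σ-algebra
(the Borel σ-algebra, for matrices over `ℝ` or `ℂ`). -/
instance matrixMeasurableSpace {m n α : Type*} [MeasurableSpace α] :
    MeasurableSpace (Matrix m n α) :=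
  inferInstanceAs (MeasurableSpace (m → n → α))

/-- The special orthogonal group `SO(n,ℝ)`: real orthogonal `n × n` matrices of
determinant `1`, as a subgroup of the orthogonal group. -/
def SO (n : ℕ) : Subgroup (Matrix.orthogonalGroup (Fin n) ℝ) where
  carrier := {M | Matrix.det (M : Matrix (Fin n) (Fin n) ℝ) = 1}
  mul_mem' := by
    intro a b ha hb
    simp only [Set.mem_setOf_eq, Matrix.UnitaryGroup.mul_val, Matrix.det_mul] at *
    rw [ha, hb, mul_one]
  one_mem' := by
    simp only [Set.mem_setOf_eq, Matrix.UnitaryGroup.one_val, Matrix.det_one]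
  inv_mem' := by
    intro a ha
    simp only [Set.mem_setOf_eq, Matrix.UnitaryGroup.inv_val] at *
    rw [Matrix.star_eq_conjTranspose, Matrix.det_conjTranspose, ha, star_one]

/-- The trace of the `k`-th power (`k : ℤ`, negative powers via the inverse) of an
element of `SO(n,ℝ)`. -/
noncomputable def trSO {n : ℕ} (M : SO n) (k : ℤ) : ℝ :=
  Matrix.trace (((M ^ k : SO n) : Matrix.orthogonalGroup (Fin n) ℝ) :
    Matrix (Fin n) (Fin n) ℝ)

/-- The standard normal cumulative distribution function
`Φ(x₀) = (1/√(2π)) ∫_{-∞}^{x₀} e^{-x²/2} dx`. -/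
noncomputable def Phi (x₀ : ℝ) : ℝ :=
  (Real.sqrt (2 * Real.pi))⁻¹ * ∫ x in Set.Iic x₀, Real.exp (-x ^ 2 / 2)

/-!
Left invariance of Haar measure under the one-parameter subgroup `exp (t Y)`, `Y = E_ab - E_ba`,
applied to `(M ^ j)_ab * G(M)` and summed over `a` and `b`, gives loop (Schwinger-Dyson) equations
for the expectations of polynomials `G` in the power traces `X k = Tr (M ^ k)`. The functional for
which `X 0 = n` and the `X k`, `k > 0`, are independent normal, with variance `k` and with mean `1`
or `0` according as `k` is even or odd, solves the same equations: its integration by parts formula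
propagates them from `G` to `X l * G`. If two solutions agree in weighted degree less than `d`, the
equations bound `n - 1` times the largest value `S` of their difference on monomials of weight `d`
by `(d - 1) * S`, so the solution is unique in all weights `d < n`. In particular the central moment
of `Tr (M ^ j)` of order `r` is exactly Gaussian whenever `r * j < n`.
-/

section GaussianFunctional

open MvPolynomial

variable {R σ : Type*} [CommRing R]

/-- The `r`-th moment of the normal distribution of mean `m` and variance `v`, over any commutative
ring; the recursion is integration by parts. -/
def gaussianMoment (m v : R) : ℕ → R
  | 0 => 1
  | 1 => m
  | r + 2 => m * gaussianMoment m v (r + 1) + (r + 1) * v * gaussianMoment m v r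

lemma gaussianMoment_succ (m v : R) (r : ℕ) :
    gaussianMoment m v (r + 1) = m * gaussianMoment m v r + r * v * gaussianMoment m v (r - 1) := by
  cases r <;> simp [gaussianMoment]

lemma gaussianMoment_mul (a m v : R) (r : ℕ) :
    gaussianMoment (a * m) (a ^ 2 * v) r = a ^ r * gaussianMoment m v r := by
  induction r using Nat.twoStepInduction with
  | zero => simp [gaussianMoment]
  | one => simp [gaussianMoment]
  | more r ih ih' => rw [gaussianMoment, gaussianMoment, ih, ih']; ring

/-- The expectation, as a functional on polynomials, under which the variables `X i` are independent
normal of mean `m i` and variance `v i`. -/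
noncomputable def gaussianFunctional (m v : σ → R) : MvPolynomial σ R →ₗ[R] R :=
  (basisMonomials σ R).constr R fun s => s.prod fun i r => gaussianMoment (m i) (v i) r

lemma gaussianFunctional_monomial (m v : σ → R) (s : σ →₀ ℕ) (a : R) :
    gaussianFunctional m v (monomial s a) =
      a * s.prod fun i r => gaussianMoment (m i) (v i) r := by
  rw [← mul_one a, ← smul_eq_mul, ← smul_monomial, map_smul, gaussianFunctional,
    ← (basisMonomials σ R).constr_basis R (fun s => s.prod fun i r => gaussianMoment (m i) (v i) r),
    coe_basisMonomials, smul_eq_mul, smul_eq_mul, mul_one]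

lemma gaussianFunctional_one (m v : σ → R) : gaussianFunctional m v 1 = 1 := by
  simpa using gaussianFunctional_monomial m v 0 1

lemma gaussianFunctional_X_mul (m v : σ → R) (i : σ) (G : MvPolynomial σ R) :
    gaussianFunctional m v (X i * G) =
      m i * gaussianFunctional m v G + v i * gaussianFunctional m v (pderiv i G) := by
  classical
  induction G using MvPolynomial.induction_on' with
  | monomial s a =>
    have moment_zero (k : σ) : gaussianMoment (m k) (v k) 0 = 1 := rfl
    have erase_add : (Finsupp.single i 1 + s).erase i = s.erase i := by
      simp [Finsupp.erase_add]
    have erase_sub : (s - Finsupp.single i 1).erase i = s.erase i := by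
      ext k; by_cases hk : k = i <;> simp [hk]
    rw [X, monomial_mul, one_mul, pderiv_monomial]
    simp only [gaussianFunctional_monomial]
    rw [← Finsupp.mul_prod_erase' (Finsupp.single i 1 + s) i _ moment_zero,
      ← Finsupp.mul_prod_erase' s i _ moment_zero,
      ← Finsupp.mul_prod_erase' (s - Finsupp.single i 1) i _ moment_zero, erase_add, erase_sub]
    simp only [Finsupp.add_apply, Finsupp.tsub_apply, Finsupp.single_eq_same, add_comm 1,
      gaussianMoment_succ]
    ring
  | add p q hp hq => rw [mul_add, map_add, map_add, map_add, map_add, hp, hq]; ring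

lemma gaussianFunctional_X (m v : σ → R) (i : σ) : gaussianFunctional m v (X i) = m i := by
  simpa [gaussianFunctional_one] using gaussianFunctional_X_mul m v i 1

lemma gaussianFunctional_X_sub_C_pow (m v : σ → R) (i : σ) (r : ℕ) :
    gaussianFunctional m v ((X i - C (m i)) ^ r) = gaussianMoment 0 (v i) r := by
  have centered (G : MvPolynomial σ R) : gaussianFunctional m v ((X i - C (m i)) * G) =
      v i * gaussianFunctional m v (pderiv i G) := by
    rw [sub_mul, map_sub, gaussianFunctional_X_mul, C_mul', map_smul, smul_eq_mul]; ring
  induction r using Nat.twoStepInduction with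
  | zero => simp [gaussianMoment, gaussianFunctional_one]
  | one => simpa [gaussianMoment] using centered 1
  | more r ih _ =>
    have pderiv_pow_succ : pderiv i ((X i - C (m i)) ^ (r + 1)) =
        (r + 1 : R) • (X i - C (m i)) ^ r := by
      rw [pderiv_pow]; simp [smul_eq_C_mul]
    rw [pow_succ', centered, pderiv_pow_succ, map_smul, ih, gaussianMoment, smul_eq_mul]; ring

lemma eq_zero_of_map_X_mul {Φ : MvPolynomial σ R →ₗ[R] R} (m v : σ → R) (h_one : Φ 1 = 0)
    (h_mul : ∀ i G, Φ (X i * G) = m i * Φ G + v i * Φ (pderiv i G)) : Φ = 0 := by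
  classical
  suffices h : ∀ d, ∀ s : σ →₀ ℕ, s.degree = d → ∀ a, Φ (monomial s a) = 0 by
    ext s
    exact h _ s rfl 1
  intro d
  induction d using Nat.strong_induction_on with
  | _ d ih =>
    rintro s rfl a
    by_cases hs : s = 0
    · rw [hs, ← mul_one a, ← smul_eq_mul, ← smul_monomial, map_smul, ← C_apply, C_1, h_one,
        smul_zero]
    obtain ⟨i, hi⟩ := Finsupp.support_nonempty_iff.mpr hs
    obtain ⟨t, rfl⟩ : ∃ t, s = Finsupp.single i 1 + t :=
      exists_add_of_le (Finsupp.single_le_iff.mpr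
        (Nat.one_le_iff_ne_zero.mpr (Finsupp.mem_support_iff.mp hi)))
    have degree_lt : t.degree < (Finsupp.single i 1 + t).degree := by
      simp [map_add]
    have degree_sub_le : (t - Finsupp.single i 1).degree ≤ t.degree :=
      Finsupp.degree_mono tsub_le_self
    rw [← one_mul a, ← monomial_mul, ← X, h_mul, pderiv_monomial, ih _ degree_lt t rfl,
      ih _ (degree_sub_le.trans_lt degree_lt) _ rfl, mul_zero, mul_zero, add_zero]

end GaussianFunctional

section LoopOperator

open MvPolynomial

/-- The multiplication part of the loop operator: with `X k` standing for the `k`-th power trace of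
an orthogonal matrix `M`, the sum of the entries `(a, b)` of the derivatives of `M ^ j` along
`E_ab - E_ba`. The absolute differences `Nat.dist` come from `M ^ i * (M ^ k)ᵀ = M ^ (i - k)`. -/
noncomputable def loopQuadratic (j : ℕ) : MvPolynomial ℕ ℝ :=
  ∑ i ∈ Finset.range j, (X i * X (j - i) - X (Nat.dist j (2 * i)))

/-- The derivation part of the loop operator: the sum over `a` and `b` of the entry `(a, b)` of
`M ^ j` times the derivative along `E_ab - E_ba` of a polynomial in the power traces of `M`. -/
noncomputable def loopDerivation (j : ℕ) : Derivation ℝ (MvPolynomial ℕ ℝ) (MvPolynomial ℕ ℝ) :=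
  mkDerivation ℝ fun k => (k : ℝ) • (X (j + k) - X (Nat.dist j k))

/-- The loop operator: `loopOperator j G` is the sum over `a` and `b` of the derivative along
`E_ab - E_ba` of the entry `(a, b)` of `M ^ j` times `G`, as a polynomial in the power traces of
`M`. The loop equations say that the Haar expectation vanishes on its range. -/
noncomputable def loopOperator (j : ℕ) : MvPolynomial ℕ ℝ →ₗ[ℝ] MvPolynomial ℕ ℝ :=
  LinearMap.mulLeft ℝ (loopQuadratic j) + (loopDerivation j : MvPolynomial ℕ ℝ →ₗ[ℝ] _)

lemma loopOperator_apply (j : ℕ) (G : MvPolynomial ℕ ℝ) :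
    loopOperator j G = loopQuadratic j * G + loopDerivation j G := rfl

lemma loopDerivation_X (j k : ℕ) :
    loopDerivation j (X k) = (k : ℝ) • (X (j + k) - X (Nat.dist j k)) :=
  mkDerivation_X ..

lemma loopOperator_X_mul (j l : ℕ) (G : MvPolynomial ℕ ℝ) :
    loopOperator j (X l * G) =
      X l * loopOperator j G + (l : ℝ) • ((X (j + l) - X (Nat.dist j l)) * G) := by
  simp only [loopOperator_apply, Derivation.leibniz, loopDerivation_X, smul_eq_mul, smul_eq_C_mul]
  ring

lemma card_filter_dist_two_mul_eq (j : ℕ) {l : ℕ} (hl : 0 < l) :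
    ((Finset.range j).filter fun i => Nat.dist j (2 * i) = l).card =
      if l < j then (if Even (j + l) then 2 else 0) else if l = j then 1 else 0 := by
  have mem_iff (i : ℕ) : i ∈ (Finset.range j).filter (fun i => Nat.dist j (2 * i) = l) ↔
      i < j ∧ (j - 2 * i + (2 * i - j) = l) := by
    rw [Finset.mem_filter, Finset.mem_range, Nat.dist]
  split_ifs with h_lt h_even h_eq
  · rw [Nat.even_iff] at h_even
    rw [Finset.card_eq_two]
    refine ⟨(j - l) / 2, (j + l) / 2, by omega, ?_⟩
    ext i
    rw [mem_iff, Finset.mem_insert, Finset.mem_singleton]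
    omega
  · rw [Nat.even_iff] at h_even
    refine Finset.card_eq_zero.mpr (Finset.eq_empty_of_forall_notMem fun i => ?_)
    rw [mem_iff]
    omega
  · rw [Finset.card_eq_one]
    refine ⟨0, ?_⟩
    ext i
    rw [mem_iff, Finset.mem_singleton]
    omega
  · refine Finset.card_eq_zero.mpr (Finset.eq_empty_of_forall_notMem fun i => ?_)
    rw [mem_iff]
    omega

lemma pderiv_loopQuadratic (j : ℕ) {l : ℕ} (hl : 0 < l) :
    pderiv l (loopQuadratic j) =
      if l < j then (2 : ℝ) • (X (j - l) - C (if Even (j + l) then 1 else 0))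
      else if l = j then X 0 - 1 else 0 := by
  have pderiv_term (i : ℕ) :
      pderiv l (X i * X (j - i) - X (Nat.dist j (2 * i)) : MvPolynomial ℕ ℝ) =
        (if i = l then X (j - l) else 0) + (if j - i = l then X i else 0)
          - (if Nat.dist j (2 * i) = l then 1 else 0) := by
    simp only [map_sub, pderiv_mul, pderiv_X, Pi.single_apply]
    split_ifs <;> simp_all
  have sum_left : ∑ i ∈ Finset.range j, (if i = l then X (j - l) else 0 : MvPolynomial ℕ ℝ) =
      if l < j then X (j - l) else 0 := by
    simp only [Finset.sum_ite_eq', Finset.mem_range]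
  have sum_right : ∑ i ∈ Finset.range j, (if j - i = l then X i else 0 : MvPolynomial ℕ ℝ) =
      if l ≤ j then X (j - l) else 0 := by
    split_ifs with h
    · rw [Finset.sum_eq_single_of_mem (j - l) (by rw [Finset.mem_range]; omega)
        fun i hi hne => if_neg (by rw [Finset.mem_range] at hi; omega), if_pos (by omega)]
    · exact Finset.sum_eq_zero fun i _ => if_neg (by omega)
  rw [loopQuadratic, map_sum, Finset.sum_congr rfl fun i _ => pderiv_term i,
    Finset.sum_sub_distrib, Finset.sum_add_distrib, sum_left, sum_right, Finset.sum_boole,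
    card_filter_dist_two_mul_eq j hl]
  rcases lt_trichotomy l j with h | rfl | h
  · simp only [h, h.le, if_true, two_smul]
    split_ifs
    · rw [Nat.cast_ofNat, map_one]; ring
    · simp
  · simp
  · simp [h.not_gt, h.not_ge, h.ne']

lemma commutator_pderiv_loopDerivation (j : ℕ) {l : ℕ} (hl : 0 < l) :
    ⁅(pderiv l : Derivation ℝ (MvPolynomial ℕ ℝ) (MvPolynomial ℕ ℝ)), loopDerivation j⁆ =
      ((l : ℝ) - j) • pderiv (Nat.dist j l) - ((j : ℝ) + l) • pderiv (j + l) := by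
  apply derivation_ext
  intro k
  have pderiv_X_const : loopDerivation j (pderiv l (X k)) = 0 := by
    rw [pderiv_X, Pi.single_apply]; split_ifs <;> simp
  have coeff_eq : (k : ℤ) * ((if j + k = l then 1 else 0) - if Nat.dist j k = l then 1 else 0) =
      (l - j) * (if k = Nat.dist j l then 1 else 0) - (j + l) * if k = j + l then 1 else 0 := by
    simp only [Nat.dist]
    grind
  have coeff_eq_cast := congrArg (Int.cast : ℤ → MvPolynomial ℕ ℝ) coeff_eq
  push_cast at coeff_eq_cast
  rw [Derivation.commutator_apply, pderiv_X_const, loopDerivation_X, sub_zero, Derivation.map_smul]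
  simp only [map_sub, Derivation.sub_apply, Derivation.smul_apply, pderiv_X, Pi.single_apply,
    smul_eq_C_mul, map_add, map_natCast]
  exact coeff_eq_cast

/-- The mean of the `k`-th power trace; the parameter `c` stands for the trace of the identity. -/
noncomputable def powerTraceMean (c : ℝ) (k : ℕ) : ℝ :=
  if k = 0 then c else if Even k then 1 else 0

/-- The expectation under which the power traces are independent normal, the `k`-th of mean
`powerTraceMean c k` and variance `k`. -/
noncomputable def powerTraceGaussian (c : ℝ) : MvPolynomial ℕ ℝ →ₗ[ℝ] ℝ :=
  gaussianFunctional (powerTraceMean c) fun k => (k : ℝ)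

lemma powerTraceMean_zero (c : ℝ) : powerTraceMean c 0 = c := if_pos rfl

lemma powerTraceMean_of_ne_zero (c : ℝ) {k : ℕ} (hk : k ≠ 0) :
    powerTraceMean c k = if Even k then 1 else 0 := if_neg hk

lemma powerTraceMean_of_odd (c : ℝ) {k : ℕ} (hk : Odd k) : powerTraceMean c k = 0 := by
  rw [powerTraceMean_of_ne_zero c hk.pos.ne', if_neg (Nat.not_even_iff_odd.mpr hk)]

lemma powerTraceGaussian_X_mul (c : ℝ) (k : ℕ) (G : MvPolynomial ℕ ℝ) :
    powerTraceGaussian c (X k * G) =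
      powerTraceMean c k * powerTraceGaussian c G + k * powerTraceGaussian c (pderiv k G) :=
  gaussianFunctional_X_mul _ _ k G

lemma powerTraceGaussian_X (c : ℝ) (k : ℕ) : powerTraceGaussian c (X k) = powerTraceMean c k :=
  gaussianFunctional_X _ _ k

lemma powerTraceGaussian_cancellation (c : ℝ) (j : ℕ) {l : ℕ} (hl : 0 < l)
    (G : MvPolynomial ℕ ℝ) :
    powerTraceGaussian c ((X (j + l) - X (Nat.dist j l)) * G +
      (pderiv l (loopQuadratic j) * G +
         ⁅(pderiv l : Derivation ℝ (MvPolynomial ℕ ℝ) _), loopDerivation j⁆ G)) = 0 := by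
  rw [commutator_pderiv_loopDerivation j hl, pderiv_loopQuadratic j hl]
  have mean_add : powerTraceMean c (j + l) = if Even (j + l) then 1 else 0 :=
    powerTraceMean_of_ne_zero c (by omega)
  have mean_dist (h : j ≠ l) : powerTraceMean c (Nat.dist j l) = if Even (j + l) then 1 else 0 := by
    rw [powerTraceMean_of_ne_zero c (by simp only [Nat.dist]; omega)]
    refine if_congr ?_ rfl rfl
    rw [Nat.even_iff, Nat.even_iff, Nat.dist]
    omega
  simp only [sub_mul, map_add, map_sub, map_smul, powerTraceGaussian_X_mul, Derivation.sub_apply,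
    Derivation.smul_apply, smul_eq_mul, mean_add]
  rcases lt_trichotomy l j with h | rfl | h
  · have dist_eq : Nat.dist j l = j - l := Nat.dist_eq_sub_of_le_right h.le
    have cast_dist : ((j - l : ℕ) : ℝ) = j - l := Nat.cast_sub h.le
    rw [if_pos h, smul_mul_assoc, sub_mul, map_smul, map_sub, powerTraceGaussian_X_mul, ← dist_eq,
      mean_dist h.ne', dist_eq, cast_dist, C_mul', map_smul, smul_eq_mul, smul_eq_mul]
    push_cast
    ring
  · have even_add_self : Even (l + l) := ⟨l, rfl⟩
    rw [if_neg (lt_irrefl l), if_pos rfl, sub_one_mul, map_sub, powerTraceGaussian_X_mul,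
      Nat.dist_self, powerTraceMean_zero, if_pos even_add_self]
    push_cast
    ring
  · have cast_dist : (Nat.dist j l : ℝ) = l - j := by
      rw [Nat.dist_eq_sub_of_le h.le, Nat.cast_sub h.le]
    rw [if_neg h.not_gt, if_neg h.ne', mean_dist h.ne, cast_dist, zero_mul, map_zero]
    push_cast
    ring

lemma powerTraceGaussian_loopOperator_X_mul (c : ℝ) (j l : ℕ) (G : MvPolynomial ℕ ℝ) :
    powerTraceGaussian c (loopOperator j (X l * G)) =
      powerTraceMean c l * powerTraceGaussian c (loopOperator j G) +
        l * powerTraceGaussian c (loopOperator j (pderiv l G)) := by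
  rw [loopOperator_X_mul, map_add, powerTraceGaussian_X_mul, map_smul, smul_eq_mul]
  rcases Nat.eq_zero_or_pos l with rfl | hl
  · simp
  have pderiv_loopOperator : pderiv l (loopOperator j G) = loopOperator j (pderiv l G) +
      (pderiv l (loopQuadratic j) * G +
        ⁅(pderiv l : Derivation ℝ (MvPolynomial ℕ ℝ) _), loopDerivation j⁆ G) := by
    rw [loopOperator_apply, loopOperator_apply, map_add, pderiv_mul, Derivation.commutator_apply]
    ring
  have cancellation := powerTraceGaussian_cancellation c j hl G
  rw [map_add] at cancellation
  rw [pderiv_loopOperator, map_add]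
  linear_combination (l : ℝ) * cancellation

lemma sum_range_two_mul_even (m : ℕ) :
    ∑ i ∈ Finset.range (2 * m), (if Even i then (1 : ℝ) else 0) = m := by
  induction m with
  | zero => simp
  | succ m ih =>
    rw [mul_add, mul_one, Finset.sum_range_succ, Finset.sum_range_succ, ih]
    simp

lemma powerTraceGaussian_quadratic_term (c : ℝ) {i j : ℕ} (hi : i < j) :
    powerTraceGaussian c (X i * X (j - i) - X (Nat.dist j (2 * i))) =
      powerTraceMean c i * powerTraceMean c (j - i) + (if j = 2 * i then (i : ℝ) else 0)
        - powerTraceMean c (Nat.dist j (2 * i)) := by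
  have self_dual : j - i = i ↔ j = 2 * i := by omega
  rw [map_sub, powerTraceGaussian_X_mul, powerTraceGaussian_X, powerTraceGaussian_X, pderiv_X,
    Pi.single_apply]
  simp only [self_dual]
  split_ifs <;> simp [powerTraceGaussian, gaussianFunctional_one]

lemma powerTraceGaussian_quadratic_term_even (c : ℝ) {i m : ℕ} (hi : i < 2 * m) :
    powerTraceGaussian c (X i * X (2 * m - i) - X (Nat.dist (2 * m) (2 * i))) =
      (if Even i then 1 else 0) - 1 + (if i = 0 then c - 1 else 0)
        + (if i = m then m + 1 - c else 0) := by
  rw [powerTraceGaussian_quadratic_term c hi]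
  rcases eq_or_ne i m with rfl | h_ne
  · rw [Nat.dist_self, show 2 * i - i = i by omega, powerTraceMean_zero,
      powerTraceMean_of_ne_zero c (by omega)]
    simp only [if_neg (show i ≠ 0 by omega)]
    split_ifs <;> ring
  · have dist_ne : Nat.dist (2 * m) (2 * i) ≠ 0 := by rw [Nat.dist]; omega
    have even_dist : Even (Nat.dist (2 * m) (2 * i)) := by rw [Nat.even_iff, Nat.dist]; omega
    have even_sub : Even (2 * m - i) ↔ Even i := by rw [Nat.even_iff, Nat.even_iff]; omega
    rw [powerTraceMean_of_ne_zero c dist_ne, if_pos even_dist, if_neg h_ne,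
      powerTraceMean_of_ne_zero c (show 2 * m - i ≠ 0 by omega),
      if_neg (show 2 * m ≠ 2 * i by omega)]
    simp only [even_sub]
    rcases eq_or_ne i 0 with rfl | hi_zero
    · simp [powerTraceMean_zero]
    · rw [powerTraceMean_of_ne_zero c hi_zero, if_neg hi_zero]
      split_ifs <;> norm_num

lemma powerTraceGaussian_quadratic_term_odd (c : ℝ) {i j : ℕ} (hj : Odd j) (hi : i < j) :
    powerTraceGaussian c (X i * X (j - i) - X (Nat.dist j (2 * i))) = 0 := by
  rw [Nat.odd_iff] at hj
  have odd_dist : Odd (Nat.dist j (2 * i)) := by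
    rw [Nat.odd_iff, Nat.dist]; omega
  have odd_factor : Odd i ∨ Odd (j - i) := by
    rw [Nat.odd_iff, Nat.odd_iff]; omega
  rw [powerTraceGaussian_quadratic_term c hi, powerTraceMean_of_odd c odd_dist,
    if_neg (by omega)]
  rcases odd_factor with h | h <;> simp [powerTraceMean_of_odd c h]

lemma powerTraceGaussian_loopOperator_one (c : ℝ) (j : ℕ) :
    powerTraceGaussian c (loopOperator j 1) = 0 := by
  rw [loopOperator_apply, Derivation.map_one_eq_zero, add_zero, mul_one, loopQuadratic, map_sum]
  rcases Nat.even_or_odd j with h_even | h_odd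
  · obtain ⟨m, rfl⟩ := h_even.exists_two_nsmul
    simp only [smul_eq_mul]
    rw [Finset.sum_congr rfl fun i hi =>
      powerTraceGaussian_quadratic_term_even c (Finset.mem_range.mp hi)]
    simp only [Finset.sum_add_distrib, Finset.sum_sub_distrib, sum_range_two_mul_even,
      Finset.sum_ite_eq', Finset.mem_range, Finset.sum_const, Finset.card_range, nsmul_one]
    rcases Nat.eq_zero_or_pos m with rfl | hm
    · simp
    · rw [if_pos (by omega), if_pos (by omega)]; push_cast; ring
  · exact Finset.sum_eq_zero fun i hi =>
      powerTraceGaussian_quadratic_term_odd c h_odd (Finset.mem_range.mp hi)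

lemma powerTraceGaussian_loopOperator (c : ℝ) (j : ℕ) (G : MvPolynomial ℕ ℝ) :
    powerTraceGaussian c (loopOperator j G) = 0 :=
  LinearMap.congr_fun (eq_zero_of_map_X_mul (Φ := powerTraceGaussian c ∘ₗ loopOperator j)
    (powerTraceMean c) (fun k => (k : ℝ)) (powerTraceGaussian_loopOperator_one c j)
    (powerTraceGaussian_loopOperator_X_mul c j)) G

end LoopOperator

section Uniqueness

open MvPolynomial

/-- The product of the power traces indexed by `s`, with multiplicity: the power sum `p_λ` of the
eigenvalues if `s` is the multiset of parts of the partition `λ`. Its weight is `s.sum`; zero parts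
are allowed. -/
noncomputable def powerTraceMonomial (s : Multiset ℕ) : MvPolynomial ℕ ℝ := (s.map X).prod

lemma powerTraceMonomial_zero : powerTraceMonomial 0 = 1 := by
  rw [powerTraceMonomial, Multiset.map_zero, Multiset.prod_zero]

lemma powerTraceMonomial_cons (k : ℕ) (s : Multiset ℕ) :
    powerTraceMonomial (k ::ₘ s) = X k * powerTraceMonomial s := by
  rw [powerTraceMonomial, powerTraceMonomial, Multiset.map_cons, Multiset.prod_cons]

lemma powerTraceMonomial_add (s t : Multiset ℕ) :
    powerTraceMonomial (s + t) = powerTraceMonomial s * powerTraceMonomial t := by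
  simp only [powerTraceMonomial, Multiset.map_add, Multiset.prod_add]

lemma powerTraceMonomial_replicate (r k : ℕ) :
    powerTraceMonomial (Multiset.replicate r k) = X k ^ r := by
  rw [powerTraceMonomial, Multiset.map_replicate, Multiset.prod_replicate]

/-- The loop equations: the functional `Φ` on polynomials in the power traces satisfies the
identities that the Haar expectation satisfies, the trace of the identity matrix being `c`. -/
structure SolvesLoopEquations (c : ℝ) (Φ : MvPolynomial ℕ ℝ →ₗ[ℝ] ℝ) : Prop where
  map_X_zero_mul : ∀ G, Φ (X 0 * G) = c * Φ G
  map_loopOperator : ∀ j G, Φ (loopOperator j G) = 0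

lemma solvesLoopEquations_powerTraceGaussian (c : ℝ) :
    SolvesLoopEquations c (powerTraceGaussian c) where
  map_X_zero_mul G := by
    rw [powerTraceGaussian_X_mul, powerTraceMean_zero, Nat.cast_zero, zero_mul, add_zero]
  map_loopOperator := powerTraceGaussian_loopOperator c

variable {c : ℝ} {Φ Ψ : MvPolynomial ℕ ℝ →ₗ[ℝ] ℝ} {d j : ℕ} {S : ℝ}

namespace SolvesLoopEquations

lemma sub (hΦ : SolvesLoopEquations c Φ) (hΨ : SolvesLoopEquations c Ψ) :
    SolvesLoopEquations c (Φ - Ψ) where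
  map_X_zero_mul G := by
    rw [LinearMap.sub_apply, LinearMap.sub_apply, hΦ.map_X_zero_mul, hΨ.map_X_zero_mul, mul_sub]
  map_loopOperator j G := by
    rw [LinearMap.sub_apply, hΦ.map_loopOperator, hΨ.map_loopOperator, sub_zero]

end SolvesLoopEquations

lemma abs_map_mul_loopDerivation_le
    (h_lower : ∀ s : Multiset ℕ, s.sum < d → Φ (powerTraceMonomial s) = 0)
    (h_bound : ∀ s : Multiset ℕ, s.sum = d → 0 ∉ s → |Φ (powerTraceMonomial s)| ≤ S)
    (hj : 0 < j) (s t : Multiset ℕ) (h_sum : j + s.sum + t.sum = d) (hs : 0 ∉ s) (ht : 0 ∉ t) :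
    |Φ (powerTraceMonomial s * loopDerivation j (powerTraceMonomial t))| ≤ t.sum * S := by
  induction t using Multiset.induction_on generalizing s with
  | empty => simp [powerTraceMonomial_zero]
  | cons k t ih =>
    rw [Multiset.sum_cons] at h_sum
    rw [Multiset.mem_cons, not_or] at ht
    have expand : powerTraceMonomial s * loopDerivation j (powerTraceMonomial (k ::ₘ t)) =
        powerTraceMonomial (k ::ₘ s) * loopDerivation j (powerTraceMonomial t) +
          (k : ℝ) • (powerTraceMonomial ((j + k) ::ₘ (s + t)) -
            powerTraceMonomial (Nat.dist j k ::ₘ (s + t))) := by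
      simp only [powerTraceMonomial_cons, powerTraceMonomial_add, Derivation.leibniz,
        loopDerivation_X, smul_eq_mul, smul_eq_C_mul]
      ring
    have join_le : |Φ (powerTraceMonomial ((j + k) ::ₘ (s + t)))| ≤ S := by
      refine h_bound _ ?_ ?_
      · rw [Multiset.sum_cons, Multiset.sum_add]; omega
      · rw [Multiset.mem_cons, Multiset.mem_add]
        rintro (h | h | h)
        exacts [by omega, hs h, ht.2 h]
    have dist_eq_zero : Φ (powerTraceMonomial (Nat.dist j k ::ₘ (s + t))) = 0 := by
      refine h_lower _ ?_
      rw [Multiset.sum_cons, Multiset.sum_add, Nat.dist]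
      omega
    have rest_le := ih (k ::ₘ s) (by rw [Multiset.sum_cons]; omega)
      (by rw [Multiset.mem_cons, not_or]; exact ⟨ht.1, hs⟩) ht.2
    rw [expand, map_add, map_smul, map_sub, dist_eq_zero, sub_zero, smul_eq_mul, Multiset.sum_cons]
    calc _ ≤ _ := abs_add_le _ _
      _ ≤ t.sum * S + k * S := by
        rw [abs_mul, Nat.abs_cast]
        gcongr
      _ = ((k + t.sum : ℕ) : ℝ) * S := by push_cast; ring

namespace SolvesLoopEquations

lemma map_loopQuadratic_mul (hΦ : SolvesLoopEquations c Φ) (hj : 0 < j) (s : Multiset ℕ) :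
    Φ (loopQuadratic j * powerTraceMonomial s) = (c - 1) * Φ (powerTraceMonomial (j ::ₘ s)) +
      ∑ i ∈ Finset.Ico 1 j, (Φ (powerTraceMonomial (i ::ₘ (j - i) ::ₘ s)) -
        Φ (powerTraceMonomial (Nat.dist j (2 * i) ::ₘ s))) := by
  have map_term (i : ℕ) : Φ ((X i * X (j - i) - X (Nat.dist j (2 * i))) * powerTraceMonomial s) =
      Φ (powerTraceMonomial (i ::ₘ (j - i) ::ₘ s)) -
        Φ (powerTraceMonomial (Nat.dist j (2 * i) ::ₘ s)) := by
    simp only [powerTraceMonomial_cons, sub_mul, map_sub, mul_assoc]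
  simp only [loopQuadratic, Finset.sum_mul, map_sum, map_term]
  rw [Finset.range_eq_Ico, Finset.sum_eq_sum_Ico_succ_bot hj, powerTraceMonomial_cons,
    hΦ.map_X_zero_mul, Nat.sub_zero, Nat.mul_zero, Nat.dist_zero_right]
  ring

lemma sub_one_mul_abs_map_le (hΦ : SolvesLoopEquations c Φ)
    (h_lower : ∀ s : Multiset ℕ, s.sum < d → Φ (powerTraceMonomial s) = 0)
    (h_bound : ∀ s : Multiset ℕ, s.sum = d → 0 ∉ s → |Φ (powerTraceMonomial s)| ≤ S)
    (s : Multiset ℕ) (h_sum : s.sum = d) (hs : 0 ∉ s) (hd : 0 < d) :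
    (c - 1) * |Φ (powerTraceMonomial s)| ≤ (d - 1) * S := by
  obtain ⟨j, hj⟩ := Multiset.exists_mem_of_ne_zero (s := s) (by rintro rfl; simp_all)
  obtain ⟨t, rfl⟩ := Multiset.exists_cons_of_mem hj
  rw [Multiset.mem_cons, not_or] at hs
  have j_pos : 0 < j := by omega
  rw [Multiset.sum_cons] at h_sum
  have split_le (i : ℕ) (hi : i ∈ Finset.Ico 1 j) :
      |Φ (powerTraceMonomial (i ::ₘ (j - i) ::ₘ t)) -
        Φ (powerTraceMonomial (Nat.dist j (2 * i) ::ₘ t))| ≤ S := by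
    rw [Finset.mem_Ico] at hi
    rw [h_lower (Nat.dist j (2 * i) ::ₘ t) (by rw [Multiset.sum_cons, Nat.dist]; omega), sub_zero]
    refine h_bound _ (by rw [Multiset.sum_cons, Multiset.sum_cons]; omega) ?_
    rw [Multiset.mem_cons, Multiset.mem_cons]
    rintro (h | h | h)
    exacts [by omega, by omega, hs.2 h]
  have derivation_le : |Φ (loopDerivation j (powerTraceMonomial t))| ≤ t.sum * S := by
    simpa only [powerTraceMonomial_zero, one_mul] using
      abs_map_mul_loopDerivation_le h_lower h_bound j_pos 0 t (by simpa using h_sum)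
        (Multiset.notMem_zero 0) hs.2
  have loop_equation := hΦ.map_loopOperator j (powerTraceMonomial t)
  rw [loopOperator_apply, map_add, hΦ.map_loopQuadratic_mul j_pos] at loop_equation
  calc (c - 1) * |Φ (powerTraceMonomial (j ::ₘ t))|
      ≤ |(c - 1) * Φ (powerTraceMonomial (j ::ₘ t))| := by
        rw [abs_mul]; gcongr; exact le_abs_self _
    _ = |∑ i ∈ Finset.Ico 1 j, (Φ (powerTraceMonomial (i ::ₘ (j - i) ::ₘ t)) -
          Φ (powerTraceMonomial (Nat.dist j (2 * i) ::ₘ t))) +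
            Φ (loopDerivation j (powerTraceMonomial t))| := by
        rw [← abs_neg]; congr 1; linear_combination -loop_equation
    _ ≤ (j - 1) * S + t.sum * S := by
        refine (abs_add_le _ _).trans (add_le_add ?_ derivation_le)
        refine (Finset.abs_sum_le_sum_abs _ _).trans ((Finset.sum_le_card_nsmul _ _ _
          split_le).trans_eq ?_)
        rw [Nat.card_Ico, nsmul_eq_mul, Nat.cast_sub j_pos, Nat.cast_one]
    _ = (d - 1) * S := by rw [← h_sum]; push_cast; ring

lemma map_eq_zero_of_zero_notMem (hΦ : SolvesLoopEquations c Φ)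
    (h : ∀ s : Multiset ℕ, s.sum = d → 0 ∉ s → Φ (powerTraceMonomial s) = 0) (s : Multiset ℕ)
    (h_sum : s.sum = d) : Φ (powerTraceMonomial s) = 0 := by
  induction s using Multiset.strongInductionOn with
  | _ s ih =>
    by_cases hs : 0 ∈ s
    · obtain ⟨t, rfl⟩ := Multiset.exists_cons_of_mem hs
      rw [Multiset.sum_cons, zero_add] at h_sum
      rw [powerTraceMonomial_cons, hΦ.map_X_zero_mul, ih t (Multiset.lt_cons_self t 0) h_sum,
        mul_zero]
    · exact h s h_sum hs

lemma map_powerTraceMonomial_eq_zero (hΦ : SolvesLoopEquations c Φ) (h_one : Φ 1 = 0)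
    (s : Multiset ℕ) (hs : (s.sum : ℝ) < c) : Φ (powerTraceMonomial s) = 0 := by
  induction hd : s.sum using Nat.strong_induction_on generalizing s with
  | _ d ih =>
    rw [hd] at hs
    have h_lower (t : Multiset ℕ) (ht : t.sum < d) : Φ (powerTraceMonomial t) = 0 :=
      ih t.sum ht t (lt_trans (Nat.cast_lt.mpr ht) hs) rfl
    refine hΦ.map_eq_zero_of_zero_notMem (fun t h_sum ht => ?_) s hd
    rcases Nat.eq_zero_or_pos d with rfl | hd_pos
    · rw [Multiset.eq_zero_of_forall_notMem (s := t) fun k hk => ?_, powerTraceMonomial_zero, h_one]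
      exact ht (Multiset.sum_eq_zero_iff.mp h_sum k hk ▸ hk)
    obtain ⟨p, hp⟩ := Finite.exists_max fun p : d.Partition => |Φ (powerTraceMonomial p.parts)|
    have h_bound (u : Multiset ℕ) (hu : u.sum = d) (hu_zero : 0 ∉ u) :
        |Φ (powerTraceMonomial u)| ≤ |Φ (powerTraceMonomial p.parts)| :=
      hp ⟨u, fun hk => Nat.pos_of_ne_zero fun h => hu_zero (h ▸ hk), hu⟩
    have max_le := hΦ.sub_one_mul_abs_map_le h_lower h_bound p.parts p.parts_sum
      (fun h => (p.parts_pos h).false) hd_pos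
    have max_nonpos : |Φ (powerTraceMonomial p.parts)| ≤ 0 := by nlinarith
    exact abs_nonpos_iff.mp ((h_bound t h_sum ht).trans max_nonpos)

lemma map_powerTraceMonomial_unique (hΦ : SolvesLoopEquations c Φ) (hΨ : SolvesLoopEquations c Ψ)
    (h_one : Φ 1 = Ψ 1) {s : Multiset ℕ} (hs : (s.sum : ℝ) < c) :
    Φ (powerTraceMonomial s) = Ψ (powerTraceMonomial s) :=
  sub_eq_zero.mp ((hΦ.sub hΨ).map_powerTraceMonomial_eq_zero (sub_eq_zero.mpr h_one) s hs)

lemma map_X_sub_C_pow_unique (hΦ : SolvesLoopEquations c Φ) (hΨ : SolvesLoopEquations c Ψ)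
    (h_one : Φ 1 = Ψ 1) {r : ℕ} (h : (r * j : ℝ) < c) (a : ℝ) :
    Φ ((X j - C a) ^ r) = Ψ ((X j - C a) ^ r) := by
  have map_X_pow (i : ℕ) (hi : i ∈ Finset.range (r + 1)) : Φ (X j ^ i) = Ψ (X j ^ i) := by
    rw [← powerTraceMonomial_replicate]
    refine hΦ.map_powerTraceMonomial_unique hΨ h_one (lt_of_le_of_lt ?_ h)
    rw [Multiset.sum_replicate, smul_eq_mul, Nat.cast_mul]
    gcongr
    exact Finset.mem_range_succ_iff.mp hi
  have expand : (X j - C a : MvPolynomial ℕ ℝ) ^ r =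
      ∑ i ∈ Finset.range (r + 1), ((-a) ^ (r - i) * r.choose i) • X j ^ i := by
    rw [sub_eq_add_neg, add_pow]
    refine Finset.sum_congr rfl fun i _ => ?_
    rw [smul_eq_C_mul, map_mul, map_pow, map_neg, map_natCast]
    ring
  simp only [expand, map_sum, map_smul]
  exact Finset.sum_congr rfl fun i hi => congrArg _ (map_X_pow i hi)

end SolvesLoopEquations

end Uniqueness

section CompactGroup

variable {G E : Type*} [Group G] [TopologicalSpace G] [IsTopologicalGroup G] [CompactSpace G]
  [MeasurableSpace G] [BorelSpace G] [NormedAddCommGroup E] [NormedSpace ℝ E]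

lemma integrable_of_continuous_of_compactSpace {X E : Type*} [TopologicalSpace X] [CompactSpace X]
    [MeasurableSpace X] [OpensMeasurableSpace X] [NormedAddCommGroup E] (μ : Measure X)
    [IsFiniteMeasure μ] {f : X → E} (hf : Continuous f) : Integrable f μ :=
  hf.integrable_of_hasCompactSupport (HasCompactSupport.of_compactSpace f)

lemma integral_eq_zero_of_hasDerivAt_mul_left (μ : Measure G) [IsFiniteMeasure μ]
    [μ.IsMulLeftInvariant] (φ : AddChar ℝ G) {f f' : G → E} (hf : Continuous f)
    (hf' : Continuous f') (h : ∀ g, HasDerivAt (fun t => f (φ t * g)) (f' g) 0) :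
    ∫ g, f' g ∂μ = 0 := by
  have integrable_translate {F : G → E} (hF : Continuous F) (t : ℝ) :
      Integrable (fun g => F (φ t * g)) μ :=
    integrable_of_continuous_of_compactSpace μ (hF.comp (continuous_const_mul (φ t)))
  have hasDerivAt_translate (g : G) (t : ℝ) :
      HasDerivAt (fun s => f (φ s * g)) (f' (φ t * g)) t := by
    have h_shift := (sub_self t ▸ h (φ t * g)).comp_sub_const t t
    simpa only [← mul_assoc, ← AddChar.map_add_eq_mul, sub_add_cancel] using h_shift
  obtain ⟨C, hC⟩ := isCompact_univ.exists_bound_of_continuousOn hf'.continuousOn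
  have h_integral := (hasDerivAt_integral_of_dominated_loc_of_deriv_le (μ := μ)
    (F := fun t g => f (φ t * g)) (F' := fun t g => f' (φ t * g)) (x₀ := 0) (bound := fun _ => C)
    Filter.univ_mem (.of_forall fun t => (integrable_translate hf t).aestronglyMeasurable)
    (integrable_translate hf 0) (integrable_translate hf' 0).aestronglyMeasurable
    (.of_forall fun g t _ => hC _ (Set.mem_univ _)) (integrable_const C)
    (.of_forall fun g t _ => hasDerivAt_translate g t)).2
  simp only [integral_mul_left_eq_self] at h_integral
  exact h_integral.unique (hasDerivAt_const 0 _)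

end CompactGroup

section SpecialOrthogonal

instance matrixBorelSpace {m n α : Type*} [Countable m] [Countable n] [MeasurableSpace α]
    [TopologicalSpace α] [SecondCountableTopology α] [BorelSpace α] : BorelSpace (Matrix m n α) :=
  inferInstanceAs (BorelSpace (m → n → α))

instance unitaryGroupCompactSpace {m 𝕜 : Type*} [RCLike 𝕜] [Fintype m] [DecidableEq m] :
    CompactSpace (unitaryGroup m 𝕜) := by
  refine isCompact_iff_compactSpace.mp (?_ : IsCompact (unitaryGroup m 𝕜 : Set (Matrix m m 𝕜)))
  have compact_entries : IsCompact (Set.univ.pi fun _ : m => Set.univ.pi fun _ : m =>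
      Metric.closedBall (0 : 𝕜) 1) :=
    isCompact_univ_pi fun _ => isCompact_univ_pi fun _ => isCompact_closedBall 0 1
  refine IsCompact.of_isClosed_subset (X := Matrix m m 𝕜) compact_entries isClosed_unitary
    fun U hU a _ b _ => ?_
  rw [mem_closedBall_zero_iff]
  exact entry_norm_bound_of_unitary hU a b

lemma isClosed_SO (n : ℕ) : IsClosed (SO n : Set (orthogonalGroup (Fin n) ℝ)) :=
  isClosed_eq continuous_subtype_val.matrix_det continuous_const

instance compactSpace_SO (n : ℕ) : CompactSpace (SO n) :=
  isCompact_iff_compactSpace.mp (isClosed_SO n).isCompact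

namespace SO

variable {n : ℕ}

/-- The matrix of an element of `SO n`, as a monoid homomorphism. -/
def toMatrix : SO n →* Matrix (Fin n) (Fin n) ℝ :=
  (orthogonalGroup (Fin n) ℝ).subtype.comp (SO n).subtype

lemma toMatrix_mem (M : SO n) : toMatrix M ∈ orthogonalGroup (Fin n) ℝ :=
  (M : orthogonalGroup (Fin n) ℝ).2

lemma toMatrix_injective : Function.Injective (toMatrix : SO n → Matrix (Fin n) (Fin n) ℝ) :=
  Subtype.val_injective.comp Subtype.val_injective

lemma continuous_toMatrix : Continuous (toMatrix : SO n → Matrix (Fin n) (Fin n) ℝ) :=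
  continuous_subtype_val.comp continuous_subtype_val

end SO

section Exponential

open scoped Matrix.Norms.Operator

variable {m : Type*} [Fintype m] [DecidableEq m]

lemma exp_mem_unitaryGroup {𝕜 : Type*} [RCLike 𝕜] {Y : Matrix m m 𝕜}
    (hY : Y ∈ skewAdjoint (Matrix m m 𝕜)) : NormedSpace.exp Y ∈ unitaryGroup m 𝕜 := by
  have exp_neg_mul_exp : NormedSpace.exp (-Y) * NormedSpace.exp Y = 1 := by
    rw [← Matrix.exp_add_of_commute _ _ (Commute.refl Y).neg_left, neg_add_cancel,
      NormedSpace.exp_zero]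
  rwa [mem_unitaryGroup_iff', star_eq_conjTranspose, ← Matrix.exp_conjTranspose,
    ← star_eq_conjTranspose, skewAdjoint.mem_iff.mp hY]

lemma det_exp_eq_one_of_mem_skewAdjoint {Y : Matrix m m ℝ} (hY : Y ∈ skewAdjoint (Matrix m m ℝ)) :
    (NormedSpace.exp Y).det = 1 := by
  have half_mem : (2⁻¹ : ℝ) • Y ∈ skewAdjoint (Matrix m m ℝ) := skewAdjoint.smul_mem _ hY
  have exp_eq_sq : NormedSpace.exp Y =
      NormedSpace.exp ((2⁻¹ : ℝ) • Y) * NormedSpace.exp ((2⁻¹ : ℝ) • Y) := by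
    rw [← Matrix.exp_add_of_commute _ _ (Commute.refl _), ← add_smul]
    norm_num
  rw [exp_eq_sq, det_mul]
  exact (Unitary.mem_iff.mp (det_of_mem_unitary (exp_mem_unitaryGroup half_mem))).1

/-- The one-parameter subgroup of `SO n` generated by a skew-symmetric matrix. -/
noncomputable def SO.expSkew {n : ℕ} (Y : skewAdjoint (Matrix (Fin n) (Fin n) ℝ)) :
    AddChar ℝ (SO n) where
  toFun t := ⟨⟨NormedSpace.exp (t • Y.1), exp_mem_unitaryGroup (skewAdjoint.smul_mem t Y.2)⟩,
    det_exp_eq_one_of_mem_skewAdjoint (skewAdjoint.smul_mem t Y.2)⟩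
  map_zero_eq_one' := SO.toMatrix_injective <|
    (congrArg NormedSpace.exp (zero_smul ℝ Y.1)).trans NormedSpace.exp_zero
  map_add_eq_mul' s t := SO.toMatrix_injective <|
    (congrArg NormedSpace.exp (add_smul s t Y.1)).trans <|
      Matrix.exp_add_of_commute _ _ (((Commute.refl Y.1).smul_left s).smul_right t)

lemma SO.toMatrix_expSkew {n : ℕ} (Y : skewAdjoint (Matrix (Fin n) (Fin n) ℝ)) (t : ℝ) :
    SO.toMatrix (SO.expSkew Y t) = NormedSpace.exp (t • Y.1) := rfl

lemma hasDerivAt_map_exp_smul_mul_pow (φ : Matrix m m ℝ →ₗ[ℝ] ℝ) (Y A : Matrix m m ℝ) (k : ℕ) :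
    HasDerivAt (fun t : ℝ => φ ((NormedSpace.exp (t • Y) * A) ^ k))
      (φ (∑ i ∈ Finset.range k, A ^ (k - 1 - i) * (Y * A) * A ^ i)) 0 := by
  have h := ((hasDerivAt_exp_smul_const Y (0 : ℝ)).mul_const A).fun_pow' k
  simp only [zero_smul, NormedSpace.exp_zero, one_mul, Nat.pred_eq_sub_one] at h
  exact φ.toContinuousLinearMap.hasFDerivAt.comp_hasDerivAt (0 : ℝ) h

end Exponential

end SpecialOrthogonal

section HaarLoopEquations

open MvPolynomial

section PowerTraceCalculus

variable {m : Type*} [Fintype m] [DecidableEq m]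

/-- Evaluation of a polynomial at the power traces of `A`. -/
noncomputable def powerTraceEval (A : Matrix m m ℝ) : MvPolynomial ℕ ℝ →ₐ[ℝ] ℝ :=
  aeval fun k => (A ^ k).trace

/-- The derivation whose value at `G`, evaluated at the power traces of `A`, is the derivative at
`t = 0` of `G` at the power traces of `exp (t • Y) * A`. -/
noncomputable def powerTraceDerivation (Y A : Matrix m m ℝ) :
    Derivation ℝ (MvPolynomial ℕ ℝ) (MvPolynomial ℕ ℝ) :=
  mkDerivation ℝ fun k => C (k * (Y * A ^ k).trace)

lemma powerTraceEval_X (A : Matrix m m ℝ) (k : ℕ) : powerTraceEval A (X k) = (A ^ k).trace :=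
  aeval_X _ k

lemma powerTraceEval_C (A : Matrix m m ℝ) (a : ℝ) : powerTraceEval A (C a) = a := aeval_C _ a

lemma powerTraceEval_powerTraceDerivation_mul_X (Y A : Matrix m m ℝ) (G : MvPolynomial ℕ ℝ)
    (k : ℕ) : powerTraceEval A (powerTraceDerivation Y A (G * X k)) =
      powerTraceEval A (powerTraceDerivation Y A G) * (A ^ k).trace +
        powerTraceEval A G * (k * (Y * A ^ k).trace) := by
  rw [Derivation.leibniz, powerTraceDerivation, mkDerivation_X, smul_eq_mul, smul_eq_mul, map_add,
    map_mul (powerTraceEval A), map_mul (powerTraceEval A), powerTraceEval_C, powerTraceEval_X]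
  ring

lemma continuous_powerTraceEval (G : MvPolynomial ℕ ℝ) :
    Continuous fun A : Matrix m m ℝ => powerTraceEval A G :=
  (continuous_eval G).comp (continuous_pi fun k => (continuous_pow k).matrix_trace)

lemma continuous_powerTraceEval_powerTraceDerivation (Y : Matrix m m ℝ) (G : MvPolynomial ℕ ℝ) :
    Continuous fun A : Matrix m m ℝ => powerTraceEval A (powerTraceDerivation Y A G) := by
  induction G using MvPolynomial.induction_on with
  | C a => simpa only [derivation_C, map_zero] using continuous_const
  | add p q hp hq => simpa only [map_add] using hp.fun_add hq
  | mul_X p k hp =>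
    have continuous_p := continuous_powerTraceEval (m := m) p
    simp only [powerTraceEval_powerTraceDerivation_mul_X]
    fun_prop

lemma hasDerivAt_trace_exp_smul_mul_pow (Y A : Matrix m m ℝ) (k : ℕ) :
    HasDerivAt (fun t : ℝ => ((NormedSpace.exp (t • Y) * A) ^ k).trace)
      (k * (Y * A ^ k).trace) 0 := by
  have trace_term (i : ℕ) (hi : i ∈ Finset.range k) :
      (A ^ (k - 1 - i) * (Y * A) * A ^ i).trace = (Y * A ^ k).trace := by
    rw [Finset.mem_range] at hi
    rw [mul_assoc, trace_mul_comm, mul_assoc, mul_assoc, ← pow_add, ← pow_succ',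
      show i + (k - 1 - i) + 1 = k by omega]
  have h := hasDerivAt_map_exp_smul_mul_pow (traceLinearMap m ℝ ℝ) Y A k
  simp only [traceLinearMap_apply] at h
  rwa [trace_sum, Finset.sum_congr rfl trace_term, Finset.sum_const, Finset.card_range,
    nsmul_eq_mul] at h

lemma hasDerivAt_powerTraceEval_exp_smul_mul (Y A : Matrix m m ℝ) (G : MvPolynomial ℕ ℝ) :
    HasDerivAt (fun t : ℝ => powerTraceEval (NormedSpace.exp (t • Y) * A) G)
      (powerTraceEval A (powerTraceDerivation Y A G)) 0 := by
  induction G using MvPolynomial.induction_on with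
  | C a => simpa only [powerTraceEval_C, derivation_C, map_zero] using hasDerivAt_const 0 a
  | add p q hp hq => simpa only [map_add] using hp.fun_add hq
  | mul_X p k hp =>
    simpa only [map_mul, powerTraceEval_X, powerTraceEval_powerTraceDerivation_mul_X, zero_smul,
      NormedSpace.exp_zero, one_mul] using hp.fun_mul (hasDerivAt_trace_exp_smul_mul_pow Y A k)

/-- The derivative at `t = 0` of the `(a, b)` entry of `B ^ j` times `G` at the power traces of
`B`, along `B = exp (t • Y) * A`. -/
noncomputable def entryDeriv (Y : Matrix m m ℝ) (a b : m) (j : ℕ) (G : MvPolynomial ℕ ℝ)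
    (A : Matrix m m ℝ) : ℝ :=
  (∑ i ∈ Finset.range j, A ^ (j - 1 - i) * (Y * A) * A ^ i : Matrix m m ℝ) a b *
      powerTraceEval A G +
    (A ^ j) a b * powerTraceEval A (powerTraceDerivation Y A G)

lemma continuous_entryDeriv (Y : Matrix m m ℝ) (a b : m) (j : ℕ) (G : MvPolynomial ℕ ℝ) :
    Continuous (entryDeriv Y a b j G) := by
  have continuous_eval := continuous_powerTraceEval (m := m) G
  have continuous_deriv := continuous_powerTraceEval_powerTraceDerivation Y G
  unfold entryDeriv
  fun_prop

lemma hasDerivAt_entry_pow_mul_powerTraceEval (Y A : Matrix m m ℝ) (a b : m) (j : ℕ)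
    (G : MvPolynomial ℕ ℝ) :
    HasDerivAt (fun t : ℝ => ((NormedSpace.exp (t • Y) * A) ^ j) a b *
      powerTraceEval (NormedSpace.exp (t • Y) * A) G) (entryDeriv Y a b j G A) 0 := by
  have h := (hasDerivAt_map_exp_smul_mul_pow (entryLinearMap ℝ ℝ a b) Y A j).fun_mul
    (hasDerivAt_powerTraceEval_exp_smul_mul Y A G)
  simp only [zero_smul, NormedSpace.exp_zero, one_mul, entryLinearMap_apply] at h
  exact h

/-- The infinitesimal rotation in the plane of the coordinates `a` and `b`. -/
def elementarySkew (a b : m) : skewAdjoint (Matrix m m ℝ) :=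
  ⟨single a b 1 - single b a 1, by
    simp [skewAdjoint.mem_iff, star_eq_conjTranspose]⟩

lemma trace_elementarySkew_mul (a b : m) (A : Matrix m m ℝ) :
    ((elementarySkew a b).1 * A).trace = A b a - A a b := by
  rw [elementarySkew, sub_mul, trace_sub, trace_single_mul, trace_single_mul]
  simp

lemma sum_mul_elementarySkew_mul_apply (A B : Matrix m m ℝ) :
    ∑ a, ∑ b, (A * (elementarySkew a b).1 * B : Matrix m m ℝ) a b =
      A.trace * B.trace - (A * Bᵀ).trace := by
  have mul_single_mul_apply (x y a b : m) : (A * single x y 1 * B : Matrix m m ℝ) a b =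
      A a x * B y b := by
    simp [mul_apply, single_apply, ite_and]
  simp only [elementarySkew, mul_sub, sub_mul, Matrix.sub_apply, mul_single_mul_apply,
    Finset.sum_sub_distrib]
  simp only [trace, diag, Finset.sum_mul_sum, mul_apply, transpose_apply]

lemma trace_pow_mul_transpose_pow {A : Matrix m m ℝ} (hA : A ∈ orthogonalGroup m ℝ) (i k : ℕ) :
    (A ^ i * (A ^ k)ᵀ).trace = (A ^ Nat.dist i k).trace := by
  have pow_mul_transpose_pow (l : ℕ) : A ^ l * (A ^ l)ᵀ = 1 :=
    (mem_orthogonalGroup_iff m ℝ).mp (pow_mem hA l)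
  rcases le_total i k with h | h
  · obtain ⟨l, rfl⟩ := Nat.exists_eq_add_of_le' h
    rw [pow_add, transpose_mul, ← mul_assoc, pow_mul_transpose_pow, one_mul, trace_transpose,
      Nat.dist_eq_sub_of_le h, Nat.add_sub_cancel]
  · obtain ⟨l, rfl⟩ := Nat.exists_eq_add_of_le' h
    rw [pow_add, mul_assoc, pow_mul_transpose_pow, mul_one, Nat.dist_eq_sub_of_le_right h,
      Nat.add_sub_cancel]

lemma sum_powerTraceDerivation_elementarySkew {A : Matrix m m ℝ} (hA : A ∈ orthogonalGroup m ℝ)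
    (j : ℕ) (G : MvPolynomial ℕ ℝ) :
    ∑ a, ∑ b, (A ^ j) a b * powerTraceEval A (powerTraceDerivation (elementarySkew a b).1 A G) =
      powerTraceEval A (loopDerivation j G) := by
  induction G using MvPolynomial.induction_on with
  | C a => simp only [derivation_C, map_zero, mul_zero, Finset.sum_const_zero]
  | add p q hp hq => simp only [map_add, mul_add, Finset.sum_add_distrib, hp, hq]
  | mul_X p k hp =>
    have sum_X : ∑ a, ∑ b, (A ^ j) a b * (k * ((elementarySkew a b).1 * A ^ k).trace) =
        powerTraceEval A (loopDerivation j (X k)) := by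
      rw [loopDerivation_X, map_smul, map_sub, powerTraceEval_X, powerTraceEval_X,
        ← trace_pow_mul_transpose_pow hA, pow_add, smul_eq_mul]
      simp only [trace_elementarySkew_mul]
      simp only [trace, diag, mul_apply, transpose_apply,
        ← Finset.sum_sub_distrib, Finset.mul_sum]
      refine Finset.sum_congr rfl fun a _ => Finset.sum_congr rfl fun b _ => ?_
      ring
    rw [Derivation.leibniz, smul_eq_mul, smul_eq_mul, map_add, map_mul, map_mul, ← sum_X, ← hp,
      powerTraceEval_X]
    simp only [powerTraceEval_powerTraceDerivation_mul_X, Finset.mul_sum, ← Finset.sum_add_distrib]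
    refine Finset.sum_congr rfl fun a _ => Finset.sum_congr rfl fun b _ => ?_
    ring

lemma sum_deriv_pow_elementarySkew {A : Matrix m m ℝ} (hA : A ∈ orthogonalGroup m ℝ) (j : ℕ) :
    ∑ a, ∑ b, (∑ i ∈ Finset.range j, A ^ (j - 1 - i) * ((elementarySkew a b).1 * A) * A ^ i :
      Matrix m m ℝ) a b =
      powerTraceEval A (loopQuadratic j) := by
  have reflect (Y : Matrix m m ℝ) :
      ∑ i ∈ Finset.range j, A ^ (j - 1 - i) * (Y * A) * A ^ i =
        ∑ i ∈ Finset.range j, A ^ i * Y * A ^ (j - i) := by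
    rw [← Finset.sum_range_reflect]
    refine Finset.sum_congr rfl fun i hi => ?_
    rw [Finset.mem_range] at hi
    rw [show j - 1 - (j - 1 - i) = i by omega, mul_assoc, mul_assoc, ← pow_succ', ← mul_assoc,
      show j - 1 - i + 1 = j - i by omega]
  simp only [reflect]
  simp only [Matrix.sum_apply]
  rw [Finset.sum_congr rfl fun a _ => Finset.sum_comm, Finset.sum_comm, loopQuadratic, map_sum]
  refine Finset.sum_congr rfl fun i hi => ?_
  rw [Finset.mem_range] at hi
  have dist_eq : Nat.dist i (j - i) = Nat.dist j (2 * i) := by simp only [Nat.dist]; omega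
  rw [sum_mul_elementarySkew_mul_apply, trace_pow_mul_transpose_pow hA, dist_eq, map_sub, map_mul,
    powerTraceEval_X, powerTraceEval_X, powerTraceEval_X]

end PowerTraceCalculus

variable {n : ℕ} (μ : Measure (SO n))

lemma integrable_powerTraceEval [IsFiniteMeasure μ] (G : MvPolynomial ℕ ℝ) :
    Integrable (fun M => powerTraceEval (SO.toMatrix M) G) μ :=
  integrable_of_continuous_of_compactSpace μ
    ((continuous_powerTraceEval G).comp SO.continuous_toMatrix)

/-- The expectation of a polynomial in the power traces of a random element of `SO n` of law `μ`. -/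
noncomputable def powerTraceExpectation [IsFiniteMeasure μ] : MvPolynomial ℕ ℝ →ₗ[ℝ] ℝ where
  toFun G := ∫ M, powerTraceEval (SO.toMatrix M) G ∂μ
  map_add' p q := by
    simp only [map_add]
    exact integral_add (integrable_powerTraceEval μ p) (integrable_powerTraceEval μ q)
  map_smul' a p := by
    simp only [map_smul, integral_smul, RingHom.id_apply]

lemma powerTraceExpectation_apply [IsFiniteMeasure μ] (G : MvPolynomial ℕ ℝ) :
    powerTraceExpectation μ G = ∫ M, powerTraceEval (SO.toMatrix M) G ∂μ := rfl

variable [IsFiniteMeasure μ] [μ.IsMulLeftInvariant]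

lemma integral_entryDeriv_eq_zero (Y : skewAdjoint (Matrix (Fin n) (Fin n) ℝ))
    (a b : Fin n) (j : ℕ) (G : MvPolynomial ℕ ℝ) :
    ∫ M, entryDeriv Y.1 a b j G (SO.toMatrix M) ∂μ = 0 := by
  refine integral_eq_zero_of_hasDerivAt_mul_left μ (SO.expSkew Y)
    (f := fun M => (SO.toMatrix M ^ j) a b * powerTraceEval (SO.toMatrix M) G) ?_
    ((continuous_entryDeriv Y.1 a b j G).comp SO.continuous_toMatrix) fun M => ?_
  · have continuous_eval := continuous_powerTraceEval (m := Fin n) G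
    refine Continuous.comp (g := fun A => (A ^ j) a b * powerTraceEval A G) ?_
      SO.continuous_toMatrix
    fun_prop
  · simpa only [map_mul, SO.toMatrix_expSkew] using
      hasDerivAt_entry_pow_mul_powerTraceEval Y.1 (SO.toMatrix M) a b j G

lemma powerTraceExpectation_loopOperator (j : ℕ) (G : MvPolynomial ℕ ℝ) :
    powerTraceExpectation μ (loopOperator j G) = 0 := by
  have eval_loopOperator (M : SO n) : powerTraceEval (SO.toMatrix M) (loopOperator j G) =
      ∑ a, ∑ b, entryDeriv (elementarySkew a b).1 a b j G (SO.toMatrix M) := by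
    rw [loopOperator_apply, map_add, map_mul,
      ← sum_powerTraceDerivation_elementarySkew (SO.toMatrix_mem M),
      ← sum_deriv_pow_elementarySkew (SO.toMatrix_mem M)]
    simp only [entryDeriv, Finset.sum_add_distrib, Finset.sum_mul]
  have integrable_entryDeriv (a b : Fin n) :
      Integrable (fun M => entryDeriv (elementarySkew a b).1 a b j G (SO.toMatrix M)) μ :=
    integrable_of_continuous_of_compactSpace μ
      ((continuous_entryDeriv _ a b j G).comp SO.continuous_toMatrix)
  simp only [powerTraceExpectation_apply, eval_loopOperator]
  rw [integral_finsetSum _ fun a _ => integrable_finsetSum _ fun b _ => integrable_entryDeriv a b]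
  refine Finset.sum_eq_zero fun a _ => ?_
  rw [integral_finsetSum _ fun b _ => integrable_entryDeriv a b]
  exact Finset.sum_eq_zero fun b _ =>
    integral_entryDeriv_eq_zero μ (elementarySkew a b) a b j G

lemma solvesLoopEquations_powerTraceExpectation :
    SolvesLoopEquations n (powerTraceExpectation μ) where
  map_X_zero_mul G := by
    simp only [powerTraceExpectation_apply, map_mul, powerTraceEval_X, pow_zero, trace_one,
      Fintype.card_fin, integral_const_mul]
  map_loopOperator := powerTraceExpectation_loopOperator μ

end HaarLoopEquations

section CentralMoments

open MvPolynomial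

variable {n j r : ℕ} (μ : Measure (SO n)) [IsProbabilityMeasure μ] [μ.IsMulLeftInvariant]

lemma integral_trace_pow_sub_mean_pow (h : r * j < n) :
    ∫ M, ((SO.toMatrix M ^ j).trace - powerTraceMean n j) ^ r ∂μ =
      gaussianMoment 0 (j : ℝ) r := by
  have expectation_one : powerTraceExpectation μ 1 = powerTraceGaussian n 1 := by
    rw [powerTraceGaussian, gaussianFunctional_one, powerTraceExpectation_apply]
    simp only [map_one, integral_const, probReal_univ, one_smul]
  have h_unique := (solvesLoopEquations_powerTraceExpectation μ).map_X_sub_C_pow_unique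
    (solvesLoopEquations_powerTraceGaussian n) expectation_one
    (mod_cast h) (powerTraceMean n j)
  rw [powerTraceGaussian, gaussianFunctional_X_sub_C_pow, powerTraceExpectation_apply] at h_unique
  simpa only [map_pow, map_sub, powerTraceEval_X, powerTraceEval_C] using h_unique

lemma integral_standardized_trace_pow_pow (hj : j ≠ 0) (h : r * j < n) :
    ∫ M, (((SO.toMatrix M ^ j).trace - powerTraceMean n j) / √(j : ℝ)) ^ r ∂μ =
      gaussianMoment 0 1 r := by
  have moment_scale := gaussianMoment_mul (√(j : ℝ)) 0 1 r
  rw [mul_zero, mul_one, Real.sq_sqrt j.cast_nonneg] at moment_scale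
  simp only [div_pow, integral_div]
  rw [integral_trace_pow_sub_mean_pow μ h, moment_scale, mul_div_cancel_left₀ _ (by positivity)]

end CentralMoments

lemma trSO_natCast {n : ℕ} (M : SO n) (j : ℕ) : trSO M j = (SO.toMatrix M ^ j).trace := by
  rw [trSO, zpow_natCast, ← map_pow]
  rfl

/-- For `4j ≤ n − 1` and Haar-distributed `M` in `SO(n,ℝ)`, the first four moments of
`W = Tr(M^j)/√j` (`j` odd) or `W = (Tr(M^j) − 1)/√j` (`j` even) match those of a
standard normal: `E[W] = 0`, `E[W²] = 1`, `E[W³] = 0`, `E[W⁴] = 3`. -/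
theorem so_four_moments (n j : ℕ) (hn : 0 < n) (hj : 0 < j) (h : 4 * j ≤ n - 1)
    (μ : Measure (SO n)) [IsProbabilityMeasure μ] [μ.IsHaarMeasure]
    (W : SO n → ℝ)
    (hW : W = fun M => if Odd j then trSO M j / Real.sqrt j
      else (trSO M j - 1) / Real.sqrt j) :
    (∫ M, W M ∂μ = 0) ∧ (∫ M, (W M) ^ 2 ∂μ = 1) ∧
      (∫ M, (W M) ^ 3 ∂μ = 0) ∧ (∫ M, (W M) ^ 4 ∂μ = 3) := by
  have W_eq (M : SO n) :
      W M = ((SO.toMatrix M ^ j).trace - powerTraceMean n j) / √(j : ℝ) := by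
    rw [hW, powerTraceMean_of_ne_zero n hj.ne', ← trSO_natCast]
    by_cases hodd : Odd j <;> simp [hodd, ← Nat.not_odd_iff_even]
  have moment_W (r : ℕ) (hr : r ≤ 4) : ∫ M, W M ^ r ∂μ = gaussianMoment 0 1 r := by
    simp only [W_eq]
    refine integral_standardized_trace_pow_pow μ hj.ne' ?_
    exact (Nat.mul_le_mul_right j hr).trans_lt (by omega)
  refine ⟨?_, ?_, ?_, ?_⟩
  · simpa [gaussianMoment] using moment_W 1 (by norm_num)
  · simpa [gaussianMoment] using moment_W 2 (by norm_num)
  · simpa [gaussianMoment] using moment_W 3 (by norm_num)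
  · rw [moment_W 4 le_rfl]
    norm_num [gaussianMoment]
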